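/- Let Γ = ((ℚ×ℝ)/ℤ²) ∪ ((ℝ×ℚ)/ℤ²) ⊂ T². For any integer q ≥ 2, any x ≠ y ∈ T² with x − y ∉ Γ, and any σ > 0, there exists a volume-preserving C^∞ diffeomorphism h of T², isotopic to the identity, such that: (1) h commutes with the translations T_{(1/q,0)} and T_{(0,1/q)}; (2) there exist x', y' ∈ T² with d(x',y') < σ, x' − y' ∉ Γ, h(x') = x, h(y') = y, and d(h(T_{(1/(2q),0)}(x')), h(T_{(1/(2q),0)}(y'))) < σ; and (3) there exists a lift h̃ of h to ℝ² with d_{C⁰}(h̃, Id_{ℝ²}) ≤ 3 d(x,y) + 2/q. -/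

import Mathlib

open Filter Topology MeasureTheory

noncomputable section

/-- The plane ℝ². -/
abbrev R2 : Type := ℝ × ℝ

/-- The Euclidean norm on ℝ². -/
def enorm2 (v : R2) : ℝ := Real.sqrt (v.1 ^ 2 + v.2 ^ 2)

/-- The two-torus 𝕋² = ℝ²/ℤ². -/
abbrev T2 : Type := AddCircle (1 : ℝ) × AddCircle (1 : ℝ)

/-- The covering projection π : ℝ² → 𝕋². -/
def pr2 (v : R2) : T2 := ((v.1 : AddCircle (1 : ℝ)), (v.2 : AddCircle (1 : ℝ)))

/-- The integer vector (v₁, v₂) regarded as a point of ℝ². -/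
def intVec (v : ℤ × ℤ) : R2 := ((v.1 : ℝ), (v.2 : ℝ))

/-- The distance on 𝕋² induced by the Euclidean metric on ℝ². -/
def distT2 (x y : T2) : ℝ :=
  sInf {r | ∃ a b : R2, pr2 a = x ∧ pr2 b = y ∧ r = enorm2 (a - b)}

/-- The C⁰ distance between two maps of 𝕋². -/
def dC0 (f g : T2 → T2) : ℝ := ⨆ x : T2, distT2 (f x) (g x)

/-- `F : ℝ² → ℝ²` is a lift of `f : 𝕋² → 𝕋²`, i.e. π ∘ F = f ∘ π. -/
def IsLift (F : R2 → R2) (f : T2 → T2) : Prop := ∀ z : R2, pr2 (F z) = f (pr2 z)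

/-- `F` commutes with the deck transformations of π : ℝ² → 𝕋². -/
def Equivariant (F : R2 → R2) : Prop :=
  ∀ (z : R2) (v : ℤ × ℤ), F (z + intVec v) = F z + intVec v

/-- `f` is a homeomorphism of 𝕋² isotopic to the identity (equivalently, admitting an
equivariant lift to ℝ²). -/
def IsotopicToId (f : T2 → T2) : Prop :=
  IsHomeomorph f ∧ ∃ F : R2 → R2, IsHomeomorph F ∧ IsLift F f ∧ Equivariant F

/-- The Misiurewicz–Ziemian rotation set of a lift `F`. -/
def rotSet (F : R2 → R2) : Set R2 :=
  {v | ∃ (z : ℕ → R2) (n : ℕ → ℕ), Tendsto n atTop atTop ∧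
      Tendsto (fun i => ((n i : ℝ))⁻¹ • (F^[n i] (z i) - z i)) atTop (𝓝 v)}

/-- Bounded mean motion, with bound κ, for a lift `F` with rotation vector `ω`:
‖Fⁿ(z) − z − nω‖ ≤ κ for all z and n. -/
def BoundedMeanMotion (F : R2 → R2) (ω : R2) (κ : ℝ) : Prop :=
  ∀ (z : R2) (n : ℕ), enorm2 (F^[n] z - z - (n : ℝ) • ω) ≤ κ

/-- The standard scalar product on ℝ². -/
def inner2 (u v : R2) : ℝ := u.1 * v.1 + u.2 * v.2

/-- v^⊥ = (−v₂, v₁)/‖v‖. -/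
def perp2 (v : R2) : R2 := (-v.2 / enorm2 v, v.1 / enorm2 v)

/-- Bounded deviation parallel to `v`, with bound κ, for a lift `F` with rotation vector `ω`:
|⟨Fⁿ(z) − z − nω, v^⊥⟩| ≤ κ for all z and n. -/
def BoundedDeviation (F : R2 → R2) (ω : R2) (v : R2) (κ : ℝ) : Prop :=
  ∀ (z : R2) (n : ℕ), |inner2 (F^[n] z - z - (n : ℝ) • ω) (perp2 v)| ≤ κ

/-- ‖ω‖_{𝕋²} = min over integer vectors z of ‖ω − z‖. -/
def normT2 (ω : R2) : ℝ := ⨅ v : ℤ × ℤ, enorm2 (ω - intVec v)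

/-- The super-Liouvillean condition: liminf_{n→∞} n⁻¹ ln ‖nω‖_{𝕋²} = −∞. -/
def SuperLiouville (ω : R2) : Prop :=
  ∀ M : ℝ, ∃ᶠ n : ℕ in atTop, (n : ℝ)⁻¹ * Real.log (normT2 ((n : ℝ) • ω)) < M

/-- The strong super-Liouvillean condition: liminf_{n→∞} n⁻¹ aⁿ ln ‖nω‖_{𝕋²} = −∞. -/
def StrongSuperLiouville (a : ℝ) (ω : R2) : Prop :=
  ∀ M : ℝ, ∃ᶠ n : ℕ in atTop, (n : ℝ)⁻¹ * a ^ n * Real.log (normT2 ((n : ℝ) • ω)) < M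

/-- ω ∈ ℝ² is irrational if ω ∉ ℚ². -/
def IrrationalVec (ω : R2) : Prop := ¬ ∃ q : ℚ × ℚ, ω = ((q.1 : ℝ), (q.2 : ℝ))

/-- ω is totally irrational if ω₁, ω₂, 1 are rationally independent. -/
def TotallyIrrationalVec (ω : R2) : Prop :=
  ∀ d1 d2 e : ℤ, (d1 : ℝ) * ω.1 + (d2 : ℝ) * ω.2 + (e : ℝ) = 0 → d1 = 0 ∧ d2 = 0 ∧ e = 0

/-- ω is semi-irrational: irrational but not totally irrational. -/
def SemiIrrationalVec (ω : R2) : Prop := IrrationalVec ω ∧ ¬ TotallyIrrationalVec ω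

/-- `v` is a character vector of the semi-irrational vector ω. -/
def IsCharacterVector (ω : R2) (v : R2) : Prop :=
  ∃ c d : ℤ, Int.gcd c d = 1 ∧ (∃ e : ℚ, (c : ℝ) * ω.1 + (d : ℝ) * ω.2 + (e : ℝ) = 0) ∧
    v = ((d : ℝ), (-c : ℝ))

/-- `f` is Hölder continuous with exponent `a`. -/
def HolderMap (a : ℝ) (f : T2 → T2) : Prop :=
  ∃ C : ℝ, ∀ x y : T2, distT2 (f x) (f y) ≤ C * distT2 x y ^ a

/-- C⁰-rigidity: liminf_{n→∞} d_{C⁰}(fⁿ, Id) = 0. -/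
def C0Rigid (f : T2 → T2) : Prop :=
  ∀ ε : ℝ, 0 < ε → ∃ᶠ n : ℕ in atTop, dC0 (f^[n]) id < ε

/-- `f` is a C^r diffeomorphism of 𝕋², expressed via a C^r lift with a C^r inverse. -/
def IsCrDiffeo (r : ℕ∞) (f : T2 → T2) : Prop :=
  ∃ F G : R2 → R2, IsLift F f ∧ Function.LeftInverse G F ∧ Function.RightInverse G F ∧
    ContDiff ℝ r F ∧ ContDiff ℝ r G

/-- C^k-rigidity: some sequence of iterates f^{n_j}, n_j → ∞, converges to the identity in the
C^k topology, i.e. admits lifts converging to the identity uniformly together with all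
derivatives of order ≤ k. -/
def CkRigid (k : ℕ∞) (f : T2 → T2) : Prop :=
  ∃ n : ℕ → ℕ, Tendsto n atTop atTop ∧
    ∃ F : ℕ → R2 → R2, (∀ j, IsLift (F j) (f^[n j])) ∧
      ∀ i : ℕ, (i : ℕ∞) ≤ k →
        Tendsto (fun j => ⨆ z : R2, ‖iteratedFDeriv ℝ i (fun w => F j w - w) z‖)
          atTop (𝓝 0)

/-- ‖x‖_𝕋 : the distance from x ∈ ℝ to the nearest integer. -/
def dT (x : ℝ) : ℝ := |x - round x|

/-- `q` is the sequence of denominators of the best rational approximations of β. -/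
def BestDenomSeq (β : ℝ) (q : ℕ → ℕ) : Prop :=
  q 0 = 1 ∧ ∀ n : ℕ,
    q n < q (n + 1) ∧
    (∀ m : ℕ, 1 ≤ m → m < q (n + 1) → dT ((q n : ℝ) * β) ≤ dT ((m : ℝ) * β)) ∧
    dT ((q n : ℝ) * β) < 1 / (q (n + 1) : ℝ)

/-- β is of non-Brjuno type: Σ_n (ln q_{n+1})/q_n = ∞. -/
def NonBrjunoNum (β : ℝ) : Prop :=
  ∀ q : ℕ → ℕ, BestDenomSeq β q → ¬ Summable fun n => Real.log (q (n + 1) : ℝ) / (q n : ℝ)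

/-- Character data of a semi-irrational vector ω: (c,d) ∈ ℤ² with gcd(c,d)=1 and
e = p/q ∈ ℚ in lowest terms with q > 0 such that c ω₁ + d ω₂ + p/q = 0. -/
def IsCharData (ω : R2) (c d p q : ℤ) : Prop :=
  Int.gcd c d = 1 ∧ Int.gcd p q = 1 ∧ 0 < q ∧
    (c : ℝ) * ω.1 + (d : ℝ) * ω.2 + (p : ℝ) / (q : ℝ) = 0

/-- ω is of strong non-Brjuno type: its character frequency 𝓕(ω̄) is of non-Brjuno type. -/
def StrongNonBrjuno (ω : R2) : Prop :=
  ∃ c d p q a b : ℤ, IsCharData ω c d p q ∧ a * d - b * c = 1 ∧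
    NonBrjunoNum (dT ((q : ℝ) * ((a : ℝ) * ω.1 + (b : ℝ) * ω.2)))

/-- The linear action of the integer matrix [[a,b],[c,d]] on ℝ². -/
def AactZ (a b c d : ℤ) (z : R2) : R2 :=
  ((a : ℝ) * z.1 + (b : ℝ) * z.2, (c : ℝ) * z.1 + (d : ℝ) * z.2)

/-- The operator norm (w.r.t. the Euclidean norm) of the matrix [[a,b],[c,d]]. -/
def AOpNormZ (a b c d : ℤ) : ℝ :=
  sSup {r | ∃ u : R2, enorm2 u ≤ 1 ∧
    r = enorm2 ((a : ℝ) * u.1 + (b : ℝ) * u.2, (c : ℝ) * u.1 + (d : ℝ) * u.2)}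

/-- Membership in the class 𝒞_{κ,ω̄}: pseudo-rotations with rotation vector ω̄ mod ℤ²
having bounded mean motion with bound κ. -/
def MemC (κ : ℝ) (w : T2) (f : T2 → T2) : Prop :=
  IsotopicToId f ∧ ∃ (F : R2 → R2) (ω : R2),
    IsLift F f ∧ rotSet F = {ω} ∧ pr2 ω = w ∧ BoundedMeanMotion F ω κ

/-- Membership in the class 𝒟_{κ,ω̄,v}: pseudo-rotations with rotation vector ω̄ mod ℤ²
having bounded deviation parallel to v with bound κ. -/
def MemD (κ : ℝ) (w : T2) (v : R2) (f : T2 → T2) : Prop :=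
  IsotopicToId f ∧ ∃ (F : R2 → R2) (ω : R2),
    IsLift F f ∧ rotSet F = {ω} ∧ pr2 ω = w ∧ BoundedDeviation F ω v κ

/-- `h : 𝕋² → 𝕋²` is homotopic to the identity (characterised by admitting an equivariant
continuous lift). -/
def HomotopicToIdMap (h : T2 → T2) : Prop :=
  ∃ H : R2 → R2, Continuous H ∧ IsLift H h ∧ Equivariant H

/-- `f` is regularly semi-conjugate to the translation T_w : x ↦ x + w, i.e. semi-conjugate via
a continuous surjection homotopic to the identity. -/
def RegSemiConj (f : T2 → T2) (w : T2) : Prop :=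
  ∃ h : T2 → T2, Continuous h ∧ Function.Surjective h ∧ HomotopicToIdMap h ∧
    ∀ x : T2, h (f x) = h x + w

/-- `f` is topologically conjugate to a translation of 𝕋². -/
def TopLinearizable (f : T2 → T2) : Prop :=
  ∃ (w : T2) (h : T2 → T2), IsHomeomorph h ∧ ∀ x : T2, h (f x) = h x + w

/-- `f` is minimal: every orbit is dense. -/
def MinimalMap (f : T2 → T2) : Prop :=
  ∀ x : T2, Dense (Set.range fun n : ℕ => f^[n] x)

/-- The open ball in 𝕋² for the Euclidean-induced distance. -/
def ballT2 (z : T2) (r : ℝ) : Set T2 := {y | distT2 z y < r}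

/-- The diameter of a subset of 𝕋² for the Euclidean-induced distance. -/
def diamT2 (S : Set T2) : ℝ := sSup {r | ∃ x ∈ S, ∃ y ∈ S, r = distT2 x y}

/-- The Euclidean diameter of a subset of ℝ². -/
def diamE (S : Set R2) : ℝ := sSup {r | ∃ x ∈ S, ∃ y ∈ S, r = enorm2 (x - y)}

/-- `F` is a bounded (measurable) fundamental domain for the ℤ²-action on ℝ². -/
def IsBoundedFundDom (F : Set R2) : Prop :=
  MeasurableSet F ∧ Bornology.IsBounded F ∧
    (∀ x : R2, ∃ v : ℤ × ℤ, x - intVec v ∈ F) ∧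
    ∀ v : ℤ × ℤ, v ≠ 0 → F ∩ ((fun x => x + intVec v) '' F) = ∅

/-- `D` is an open topological disc in 𝕋². -/
def IsTopDisc (D : Set T2) : Prop :=
  IsOpen D ∧ Nonempty (D ≃ₜ Metric.ball (0 : R2) 1)

/-- `D` is simple with respect to the fundamental domain `F`: some connected component of
π⁻¹(D) is contained in `F`. -/
def IsSimpleDisc (D : Set T2) (F : Set R2) : Prop :=
  ∃ x ∈ pr2 ⁻¹' D, connectedComponentIn (pr2 ⁻¹' D) x ⊆ F

/-- `u` is the rotation vector of `g`, defined as the mean displacement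
∫_{𝕋²} (g̃(x̃) − x̃) dλ(x) mod ℤ² of an equivariant lift `G` of `g`. -/
def IsRotOf (g : T2 → T2) (u : T2) : Prop :=
  ∃ (G : R2 → R2) (Φ : T2 → R2), Continuous G ∧ IsLift G g ∧ Equivariant G ∧
    (∀ z : R2, Φ (pr2 z) = G z - z) ∧ u = pr2 (∫ x : T2, Φ x)

/-- The set Γ = ((ℚ×ℝ)/ℤ²) ∪ ((ℝ×ℚ)/ℤ²) of points of 𝕋² with at least one rational
coordinate. -/
def GammaSet : Set T2 :=
  {x | (∃ q : ℚ, x.1 = ((q : ℝ) : AddCircle (1 : ℝ))) ∨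
       (∃ q : ℚ, x.2 = ((q : ℝ) : AddCircle (1 : ℝ)))}

/-- Composition of a vertical shear followed by a horizontal shear. -/
def shear2 {G : Type} [AddCommGroup G] [TopologicalSpace G] [IsTopologicalAddGroup G]
    (f g : G → G) (hf : Continuous f) (hg : Continuous g) : (G × G) ≃ₜ (G × G) where
  toFun z := (z.1 + f (z.2 + g z.1), z.2 + g z.1)
  invFun z := (z.1 - f z.2, z.2 - g (z.1 - f z.2))
  left_inv z := by simp
  right_inv z := by simp
  continuous_toFun := by fun_prop
  continuous_invFun := by fun_prop

lemma pr2_add (a b : R2) : pr2 (a + b) = pr2 a + pr2 b := by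
  simp [pr2]

lemma pr2_sub (a b : R2) : pr2 (a - b) = pr2 a - pr2 b := by
  simp [pr2]

lemma pr2_surj (x : T2) : ∃ a : R2, pr2 a = x := by
  obtain ⟨x1, x2⟩ := x
  obtain ⟨a, rfl⟩ := QuotientAddGroup.mk_surjective x1
  obtain ⟨b, rfl⟩ := QuotientAddGroup.mk_surjective x2
  exact ⟨(a, b), rfl⟩

lemma enorm2_le (v : R2) : enorm2 v ≤ |v.1| + |v.2| := by
  unfold enorm2
  apply Real.sqrt_le_iff.2
  refine ⟨by positivity, ?_⟩
  nlinarith [sq_abs v.1, sq_abs v.2, abs_nonneg v.1, abs_nonneg v.2,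
    mul_nonneg (abs_nonneg v.1) (abs_nonneg v.2)]

lemma abs_fst_le_enorm2 (v : R2) : |v.1| ≤ enorm2 v := by
  unfold enorm2
  apply Real.abs_le_sqrt
  nlinarith [sq_nonneg v.2]

lemma abs_snd_le_enorm2 (v : R2) : |v.2| ≤ enorm2 v := by
  unfold enorm2
  apply Real.abs_le_sqrt
  nlinarith [sq_nonneg v.1]

lemma distT2_le (a b : R2) : distT2 (pr2 a) (pr2 b) ≤ enorm2 (a - b) := by
  apply csInf_le
  · refine ⟨0, ?_⟩
    rintro r ⟨a, b, -, -, rfl⟩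
    exact Real.sqrt_nonneg _
  · exact ⟨a, b, rfl, rfl, rfl⟩

lemma distT2_nonneg (x y : T2) : 0 ≤ distT2 x y := by
  apply Real.sInf_nonneg
  rintro r ⟨a, b, -, -, rfl⟩
  exact Real.sqrt_nonneg _

lemma exists_close (x y : T2) (e : ℝ) (he : 0 < e) :
    ∃ a b : R2, pr2 a = x ∧ pr2 b = y ∧ enorm2 (a - b) < distT2 x y + e := by
  have hne : {r | ∃ a b : R2, pr2 a = x ∧ pr2 b = y ∧ r = enorm2 (a - b)}.Nonempty := by
    obtain ⟨a, ha⟩ := pr2_surj x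
    obtain ⟨b, hb⟩ := pr2_surj y
    exact ⟨_, a, b, ha, hb, rfl⟩
  obtain ⟨r, ⟨a, b, ha, hb, rfl⟩, hr⟩ := exists_lt_of_csInf_lt hne
    (show distT2 x y < distT2 x y + e by linarith)
  exact ⟨a, b, ha, hb, hr⟩

lemma coe_rat_iff (t : ℝ) :
    (∃ q : ℚ, (t : AddCircle (1 : ℝ)) = ((q : ℝ) : AddCircle (1 : ℝ))) ↔ ¬ Irrational t := by
  constructor
  · rintro ⟨q, hq⟩ hirr
    have : ((t - q : ℝ) : AddCircle (1 : ℝ)) = 0 := by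
      rw [AddCircle.coe_sub, hq, sub_self]
    rw [AddCircle.coe_eq_zero_iff] at this
    obtain ⟨n, hn⟩ := this
    apply hirr
    refine ⟨q + n, ?_⟩
    simp at hn
    push_cast
    linarith
  · intro h
    unfold Irrational at h
    push Not at h
    obtain ⟨q, rfl⟩ := h
    exact ⟨q, rfl⟩

lemma not_mem_Gamma (v : R2) :
    pr2 v ∉ GammaSet ↔ Irrational v.1 ∧ Irrational v.2 := by
  have h1 := coe_rat_iff v.1
  have h2 := coe_rat_iff v.2
  simp only [GammaSet, pr2, Set.mem_ofPred_eq]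
  rw [h1, h2]
  tauto

lemma shear2_measurePreserving
    (f g : AddCircle (1 : ℝ) → AddCircle (1 : ℝ)) (hf : Continuous f) (hg : Continuous g) :
    MeasurePreserving (shear2 f g hf hg) (volume : Measure T2) volume := by
  have hV : ∀ k : AddCircle (1 : ℝ) → AddCircle (1 : ℝ), Continuous k →
      MeasurePreserving (fun z : T2 => (z.1, z.2 + k z.1)) (volume : Measure T2) volume := by
    intro k hk
    have hm : Measurable k := hk.measurable
    refine MeasurePreserving.skew_product (f := id) (g := fun a b => b + k a)
      (MeasurePreserving.id _) (by
        have : Continuous (fun p : T2 => p.2 + k p.1) := by fun_prop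
        exact this.measurable) ?_
    filter_upwards with a
    exact (measurePreserving_add_right volume (k a)).map_eq
  have hS : MeasurePreserving (Prod.swap : T2 → T2) (volume : Measure T2) volume :=
    Measure.measurePreserving_swap
  exact (hS.comp ((hV f hf).comp hS)).comp (hV g hg)

/-- The general construction of the map from two real periodic functions. -/
lemma shear_construction (q : ℕ) (hq : 2 ≤ q) (φ ψ : ℝ → ℝ)
    (hφ : ContDiff ℝ ((⊤ : ℕ∞) : WithTop ℕ∞) φ) (hψ : ContDiff ℝ ((⊤ : ℕ∞) : WithTop ℕ∞) ψ)
    (pφ : Function.Periodic φ (1 / (q : ℝ))) (pψ : Function.Periodic ψ (1 / (q : ℝ))) :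
    ∃ h : T2 → T2, ∃ H : R2 → R2,
      (∀ z, H z = (z.1 + φ (z.2 + ψ z.1), z.2 + ψ z.1)) ∧
      IsotopicToId h ∧ IsCrDiffeo ⊤ h ∧
      MeasurePreserving h (volume : Measure T2) volume ∧
      (∀ z : T2, h (z + pr2 (1 / (q : ℝ), 0)) = h z + pr2 (1 / (q : ℝ), 0)) ∧
      (∀ z : T2, h (z + pr2 (0, 1 / (q : ℝ))) = h z + pr2 (0, 1 / (q : ℝ))) ∧
      IsHomeomorph H ∧ IsLift H h ∧ Equivariant H := by
  have hq0 : (q : ℝ) ≠ 0 := by positivity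
  have per1 : ∀ {k : ℝ → ℝ}, Function.Periodic k (1 / (q : ℝ)) → Function.Periodic k 1 := by
    intro k hk
    have := hk.nat_mul q
    rwa [mul_one_div_cancel hq0] at this
  have p1φ := per1 pφ
  have p1ψ := per1 pψ
  have cφ := hφ.continuous
  have cψ := hψ.continuous
  let f : AddCircle (1 : ℝ) → AddCircle (1 : ℝ) := fun t => ((p1φ.lift t : ℝ) : AddCircle (1 : ℝ))
  let g : AddCircle (1 : ℝ) → AddCircle (1 : ℝ) := fun t => ((p1ψ.lift t : ℝ) : AddCircle (1 : ℝ))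
  have hf : Continuous f := (AddCircle.continuous_mk' (1 : ℝ)).comp (continuous_quot_lift _ cφ)
  have hg : Continuous g := (AddCircle.continuous_mk' (1 : ℝ)).comp (continuous_quot_lift _ cψ)
  let h := shear2 f g hf hg
  let H := shear2 φ ψ cφ cψ
  have hfc : ∀ t : ℝ, f (t : AddCircle (1 : ℝ)) = ((φ t : ℝ) : AddCircle (1 : ℝ)) := fun t => rfl
  have hgc : ∀ t : ℝ, g (t : AddCircle (1 : ℝ)) = ((ψ t : ℝ) : AddCircle (1 : ℝ)) := fun t => rfl
  have hH : ∀ z, H z = (z.1 + φ (z.2 + ψ z.1), z.2 + ψ z.1) := fun z => rfl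
  have hL : IsLift H h := by
    intro z
    change pr2 (z.1 + φ (z.2 + ψ z.1), z.2 + ψ z.1) =
      ((z.1 : AddCircle (1 : ℝ)) + f ((z.2 : AddCircle (1 : ℝ)) + g (z.1 : AddCircle (1 : ℝ))),
        (z.2 : AddCircle (1 : ℝ)) + g (z.1 : AddCircle (1 : ℝ)))
    rw [hgc, ← AddCircle.coe_add 1 z.2 (ψ z.1), hfc]
    rfl
  have hE : Equivariant H := by
    intro z v
    have e1 : ψ (z.1 + (v.1 : ℝ)) = ψ z.1 := by
      simpa using p1ψ.int_mul v.1 z.1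
    have e2 : φ (z.2 + (v.2 : ℝ) + ψ z.1) = φ (z.2 + ψ z.1) := by
      have := p1φ.int_mul v.2 (z.2 + ψ z.1)
      rw [← this]; congr 1; ring
    simp only [hH, intVec, Prod.fst_add, Prod.snd_add, e1, e2, Prod.mk_add_mk]
    ext <;> simp <;> ring
  refine ⟨h, H, hH, ⟨h.isHomeomorph, H, H.isHomeomorph, hL, hE⟩,
    ⟨H, H.symm, hL, H.left_inv, H.right_inv, ?_, ?_⟩, shear2_measurePreserving f g hf hg,
    ?_, ?_, H.isHomeomorph, hL, hE⟩
  · change ContDiff ℝ ((⊤ : ℕ∞) : WithTop ℕ∞)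
      (fun z : R2 => (z.1 + φ (z.2 + ψ z.1), z.2 + ψ z.1))
    fun_prop
  · change ContDiff ℝ ((⊤ : ℕ∞) : WithTop ℕ∞)
      (fun z : R2 => (z.1 - φ z.2, z.2 - ψ (z.1 - φ z.2)))
    fun_prop
  · intro z
    obtain ⟨w, rfl⟩ := pr2_surj z
    rw [← pr2_add, ← hL, ← hL, ← pr2_add]
    congr 1
    simp only [hH, Prod.fst_add, Prod.snd_add, add_zero, pψ w.1, Prod.mk_add_mk]
    ext <;> simp; ring
  · intro z
    obtain ⟨w, rfl⟩ := pr2_surj z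
    rw [← pr2_add, ← hL, ← hL, ← pr2_add]
    congr 1
    have e2 : φ (w.2 + 1 / (q : ℝ) + ψ w.1) = φ (w.2 + ψ w.1) := by
      rw [← pφ (w.2 + ψ w.1)]; congr 1; ring
    simp only [hH, Prod.fst_add, Prod.snd_add, add_zero, e2, Prod.mk_add_mk]
    ext <;> simp; ring

lemma sT_abs (c t : ℝ) : |c * Real.smoothTransition t| ≤ |c| := by
  rw [abs_mul, abs_of_nonneg (Real.smoothTransition.nonneg t)]
  exact mul_le_of_le_one_right (abs_nonneg _) (Real.smoothTransition.le_one t)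

/-- **Lemma 6.2.** For any integer q ≥ 2, any x ≠ y in 𝕋² with x − y ∉ Γ, and any σ > 0,
there is a volume-preserving C^∞ diffeomorphism h of 𝕋², isotopic to the identity, commuting
with T_{(1/q,0)} and T_{(0,1/q)}, with points x', y' as in (2) and a lift h̃ with
d_{C⁰}(h̃, Id) ≤ 3 d(x,y) + 2/q. -/
theorem anosov_katok_building_block
    (q : ℕ) (hq : 2 ≤ q) (x y : T2) (hxy : x ≠ y) (hΓ : x - y ∉ GammaSet)
    (σ : ℝ) (hσ : 0 < σ) :
    ∃ h : T2 → T2,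
      IsotopicToId h ∧ IsCrDiffeo ⊤ h ∧
      MeasurePreserving h (volume : Measure T2) volume ∧
      (∀ z : T2, h (z + pr2 (1 / (q : ℝ), 0)) = h z + pr2 (1 / (q : ℝ), 0)) ∧
      (∀ z : T2, h (z + pr2 (0, 1 / (q : ℝ))) = h z + pr2 (0, 1 / (q : ℝ))) ∧
      (∃ x' y' : T2, distT2 x' y' < σ ∧ x' - y' ∉ GammaSet ∧
        h x' = x ∧ h y' = y ∧
        distT2 (h (x' + pr2 (1 / (2 * (q : ℝ)), 0))) (h (y' + pr2 (1 / (2 * (q : ℝ)), 0))) < σ) ∧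
      (∃ H : R2 → R2, IsHomeomorph H ∧ IsLift H h ∧ Equivariant H ∧
        ∀ z : R2, enorm2 (H z - z) ≤ 3 * distT2 x y + 2 / (q : ℝ)) := by
  have hq1 : (2 : ℝ) ≤ q := by exact_mod_cast hq
  have hq0 : (0 : ℝ) < q := by linarith
  have hq0' : (q : ℝ) ≠ 0 := hq0.ne'
  set m : ℝ := 1 / (4 * (q : ℝ)) with hm
  have hmpos : 0 < m := by positivity
  obtain ⟨a, b, rfl, rfl, hab⟩ := exists_close x y m hmpos
  rw [← pr2_sub, not_mem_Gamma] at hΓ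
  obtain ⟨hu, hv⟩ := hΓ
  set D := distT2 (pr2 a) (pr2 b) with hD
  have hD0 : 0 ≤ D := distT2_nonneg _ _
  obtain ⟨x1, x2⟩ := a
  obtain ⟨y1, y2⟩ := b
  have hu' := abs_fst_le_enorm2 ((x1, x2) - (y1, y2))
  have hv' := abs_snd_le_enorm2 ((x1, x2) - (y1, y2))
  simp only [Prod.mk_sub_mk] at hu hv hu' hv' hab
  -- the first small parameter
  obtain ⟨e1, he1, he10, he1lt⟩ := exists_irrational_btwn
    (show (0 : ℝ) < min (σ / 4) m by positivity)
  have he1σ : e1 < σ / 4 := lt_of_lt_of_le he1lt (min_le_left _ _)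
  have he1m : e1 < m := lt_of_lt_of_le he1lt (min_le_right _ _)
  -- the horizontal shear
  set s0 : ℝ := Real.sin (Real.pi * q * (x2 - y2)) ^ 2 with hs0
  have hs0pos : s0 ≠ 0 := by
    rw [hs0]
    apply pow_ne_zero
    intro h0
    rw [Real.sin_eq_zero_iff] at h0
    obtain ⟨n, hn⟩ := h0
    apply hv
    refine ⟨(n : ℚ) / q, ?_⟩
    push_cast
    have : (n : ℝ) = q * (x2 - y2) := by
      apply mul_left_cancel₀ Real.pi_ne_zero
      linarith
    rw [this]
    field_simp
  set φ : ℝ → ℝ := fun t =>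
    (x1 - y1 - e1) * Real.smoothTransition (Real.sin (Real.pi * q * (t - y2)) ^ 2 / s0) with hφd
  have hsT : ContDiff ℝ ((⊤ : ℕ∞) : WithTop ℕ∞) Real.smoothTransition :=
    Real.smoothTransition.contDiff
  have hφ : ContDiff ℝ ((⊤ : ℕ∞) : WithTop ℕ∞) φ := by
    rw [hφd]
    refine contDiff_const.mul (hsT.comp (ContDiff.div_const (ContDiff.pow ?_ 2) s0))
    exact Real.contDiff_sin.comp (by fun_prop)
  have pφ : Function.Periodic φ (1 / (q : ℝ)) := by
    intro t
    have : Real.pi * q * (t + 1 / (q : ℝ) - y2) = Real.pi * q * (t - y2) + Real.pi := by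
      field_simp
      ring
    simp only [hφd, this, Real.sin_add_pi, neg_sq]
  have φx : φ x2 = x1 - y1 - e1 := by
    simp only [hφd]
    rw [← hs0, div_self hs0pos, Real.smoothTransition.one, mul_one]
  have φy : φ y2 = 0 := by simp [hφd]
  have φb : ∀ t, |φ t| ≤ |x1 - y1 - e1| := fun t => sT_abs _ _
  -- the second small parameter
  obtain ⟨δ, hδ, hδφ⟩ := Metric.continuousAt_iff.1
    (hφ.continuous.continuousAt (x := y2)) (σ / 4) (by positivity)
  obtain ⟨e2, he2, he20, he2lt⟩ := exists_irrational_btwn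
    (show (0 : ℝ) < min δ (min (σ / 4) m) by positivity)
  have he2δ : e2 < δ := lt_of_lt_of_le he2lt (min_le_left _ _)
  have he2σ : e2 < σ / 4 :=
    lt_of_lt_of_le he2lt ((min_le_right _ _).trans (min_le_left _ _))
  have he2m : e2 < m := lt_of_lt_of_le he2lt ((min_le_right _ _).trans (min_le_right _ _))
  have hφe2 : |φ (y2 + e2)| < σ / 4 := by
    have := @hδφ (y2 + e2) (by simp [abs_of_pos he20, he2δ])
    rwa [φy, Real.dist_eq, sub_zero] at this
  -- the vertical shear
  set s1 : ℝ := Real.sin (2 * Real.pi * q * e1) with hs1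
  have hs1pos : 0 < s1 := by
    apply Real.sin_pos_of_pos_of_lt_pi
    · positivity
    · have h1 : e1 * (4 * q) < 1 := by
        rw [hm, lt_div_iff₀ (by positivity)] at he1m
        exact he1m
      nlinarith [Real.pi_pos]
  set ψ : ℝ → ℝ := fun t =>
    (x2 - y2 - e2) * Real.smoothTransition (Real.sin (2 * Real.pi * q * (t - y1)) / s1) with hψd
  have hψ : ContDiff ℝ ((⊤ : ℕ∞) : WithTop ℕ∞) ψ := by
    rw [hψd]
    refine contDiff_const.mul (hsT.comp (ContDiff.div_const ?_ s1))
    exact Real.contDiff_sin.comp (by fun_prop)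
  have pψ : Function.Periodic ψ (1 / (q : ℝ)) := by
    intro t
    have : 2 * Real.pi * q * (t + 1 / (q : ℝ) - y1)
        = 2 * Real.pi * q * (t - y1) + 2 * Real.pi := by
      field_simp
      ring
    simp only [hψd, this, Real.sin_add_two_pi]
  have ψ1 : ψ y1 = 0 := by simp [hψd]
  have ψ2 : ψ (y1 + e1) = x2 - y2 - e2 := by
    simp only [hψd, add_sub_cancel_left]
    rw [← hs1, div_self hs1pos.ne', Real.smoothTransition.one, mul_one]
  have ψ3 : ψ (y1 + 1 / (2 * (q : ℝ))) = 0 := by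
    have : 2 * Real.pi * q * (y1 + 1 / (2 * (q : ℝ)) - y1) = Real.pi := by
      field_simp
      ring
    simp only [hψd, this, Real.sin_pi, zero_div, Real.smoothTransition.zero, mul_zero]
  have ψ4 : ψ (y1 + e1 + 1 / (2 * (q : ℝ))) = 0 := by
    have : 2 * Real.pi * q * (y1 + e1 + 1 / (2 * (q : ℝ)) - y1)
        = 2 * Real.pi * q * e1 + Real.pi := by
      field_simp
      ring
    simp only [hψd, this, Real.sin_add_pi]
    rw [← hs1, Real.smoothTransition.zero_of_nonpos, mul_zero]
    rw [neg_div, div_self hs1pos.ne']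
    norm_num
  have ψb : ∀ t, |ψ t| ≤ |x2 - y2 - e2| := fun t => sT_abs _ _
  obtain ⟨h, H, hH, h1, h2, h3, h4, h5, h6, h7, h8⟩ :=
    shear_construction q hq φ ψ hφ hψ pφ pψ
  refine ⟨h, h1, h2, h3, h4, h5, ⟨pr2 (y1 + e1, y2 + e2), pr2 (y1, y2), ?_, ?_, ?_, ?_, ?_⟩,
    H, h6, h7, h8, ?_⟩
  · refine lt_of_le_of_lt ((distT2_le _ _).trans (enorm2_le _)) ?_
    simp only [Prod.mk_sub_mk, add_sub_cancel_left, abs_of_pos he10, abs_of_pos he20]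
    linarith
  · rw [← pr2_sub, not_mem_Gamma]
    simpa using ⟨he1, he2⟩
  · rw [← h7, hH]
    simp only [ψ2]
    have : y2 + e2 + (x2 - y2 - e2) = x2 := by ring
    rw [this, φx]
    congr 2
    ring
  · rw [← h7, hH]
    simp [ψ1, φy]
  · rw [← pr2_add, ← pr2_add, ← h7, ← h7, hH, hH]
    simp only [Prod.mk_add_mk, add_zero, ψ3, ψ4, φy]
    refine lt_of_le_of_lt ((distT2_le _ _).trans (enorm2_le _)) ?_
    simp only [Prod.mk_sub_mk, add_sub_cancel_left, abs_of_pos he20]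
    have : y1 + e1 + 1 / (2 * (q : ℝ)) + φ (y2 + e2) - (y1 + 1 / (2 * (q : ℝ)))
        = e1 + φ (y2 + e2) := by ring
    rw [this]
    have := abs_add_le e1 (φ (y2 + e2))
    rw [abs_of_pos he10] at this
    linarith
  · intro z
    rw [hH]
    refine (enorm2_le _).trans ?_
    simp only [Prod.fst_sub, Prod.snd_sub, add_sub_cancel_left]
    have k1 := φb (z.2 + ψ z.1)
    have k2 := ψb z.1
    have k3 := abs_sub (x1 - y1) e1
    have k4 := abs_sub (x2 - y2) e2
    rw [abs_of_pos he10] at k3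
    rw [abs_of_pos he20] at k4
    have hm2 : 2 / (q : ℝ) = 8 * m := by
      rw [hm]
      field_simp
      norm_num
    linarith
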